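/- arXiv:2602.06168 — 2 statements merged into one kernel-verified Lean document; each statement's English description precedes it below -/
import Mathlib

section
/- (Saturation theorem) Let μ > 0 and let f : [0,1] → ℝ be continuous. Then |L_n(f, x) − f(x)| = o(1/n) as n → ∞ for every x ∈ (0,1) if and only if f is a classical solution on (0,1) of the second-order differential equation f_μ'(x) + (1+μ) f_μ''(x) = 0, where f_μ(t) := f(t)/ln(1+μ+t); that is, if and only if f_μ is twice differentiable on (0,1) with f_μ'(x) + (1+μ) f_μ''(x) = 0 for all x ∈ (0,1). -/
open Real Filter Set

/-- `logμ μ x = ln(1+μ+x)`. -/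
noncomputable def logμ (μ x : ℝ) : ℝ := Real.log (1 + μ + x)

/-- `a μ n x = ln(1 + x/(n(1+μ))) / ln(1 + 1/(n(1+μ)))`. -/
noncomputable def aFun (μ : ℝ) (n : ℕ) (x : ℝ) : ℝ :=
  Real.log (1 + x / (n * (1 + μ))) / Real.log (1 + 1 / (n * (1 + μ)))

/-- Bernstein basis polynomial `p_{n,k}(y) = C(n,k) y^k (1-y)^(n-k)`. -/
noncomputable def pB (n k : ℕ) (y : ℝ) : ℝ :=
  (n.choose k : ℝ) * y ^ k * (1 - y) ^ (n - k)

/-- Classical Bernstein operator. -/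
noncomputable def Bop (n : ℕ) (g : ℝ → ℝ) (y : ℝ) : ℝ :=
  ∑ k ∈ Finset.range (n + 1), g ((k : ℝ) / (n : ℝ)) * pB n k y

/-- Bernstein-type logarithmic operator `L_n`. -/
noncomputable def Lop (μ : ℝ) (n : ℕ) (f : ℝ → ℝ) (x : ℝ) : ℝ :=
  logμ μ x * ∑ k ∈ Finset.range (n + 1),
    f ((k : ℝ) / (n : ℝ)) * (1 / logμ μ ((k : ℝ) / (n : ℝ))) * pB n k (aFun μ n x)

/-!
The function `fμ = f / logμ μ` satisfies `Lop μ n f x = logμ μ x * Bop n fμ (aFun μ n x)`, so the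
theorem is about Bernstein polynomials evaluated at the displaced points `aFun μ n x`, where
`n (aFun μ n x - x) → x (1 - x) / (2 (1 + μ))`. Voronovskaja's formula along these points reads
`n (Bop n g (aFun μ n x) - g x) → x (1 - x) / (2 (1 + μ)) * (g' x + (1 + μ) g'' x)`,
which settles one direction. For the other, a comparison principle shows that a continuous `g` all
of whose limits vanish is determined by `g 0` and `g 1`, so it coincides with the solution
`A + B exp (-t / (1 + μ))` of the equation that has the same boundary values.
-/

open Asymptotics Topology

section BernsteinOperator

variable {n : ℕ} {y : ℝ}

lemma pB_nonneg (n k : ℕ) (hy : y ∈ Icc (0 : ℝ) 1) : 0 ≤ pB n k y :=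
  mul_nonneg (mul_nonneg (Nat.cast_nonneg _) (pow_nonneg hy.1 _))
    (pow_nonneg (sub_nonneg.2 hy.2) _)

lemma natCast_div_mem_Icc {k : ℕ} (hk : k ∈ Finset.range (n + 1)) :
    (k / n : ℝ) ∈ Icc (0 : ℝ) 1 :=
  ⟨by positivity, div_le_one_of_le₀
    (Nat.cast_le.2 (Finset.mem_range_succ_iff.1 hk)) (Nat.cast_nonneg n)⟩

lemma Bop_add (n : ℕ) (g h : ℝ → ℝ) (y : ℝ) :
    Bop n (fun t => g t + h t) y = Bop n g y + Bop n h y := by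
  simp only [Bop, add_mul, Finset.sum_add_distrib]

lemma Bop_const_mul (n : ℕ) (c : ℝ) (g : ℝ → ℝ) (y : ℝ) :
    Bop n (fun t => c * g t) y = c * Bop n g y := by
  simp only [Bop, mul_assoc, Finset.mul_sum]

lemma Bop_sub (n : ℕ) (g h : ℝ → ℝ) (y : ℝ) :
    Bop n (fun t => g t - h t) y = Bop n g y - Bop n h y := by
  simp only [Bop, sub_mul, Finset.sum_sub_distrib]

lemma Bop_congr {g h : ℝ → ℝ} (hgh : EqOn g h (Icc 0 1)) (n : ℕ) (y : ℝ) :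
    Bop n g y = Bop n h y :=
  Finset.sum_congr rfl fun _ hk => by rw [hgh (natCast_div_mem_Icc hk)]

lemma Bop_mono {g h : ℝ → ℝ} (n : ℕ) (hy : y ∈ Icc (0 : ℝ) 1)
    (hgh : ∀ t ∈ Icc (0 : ℝ) 1, g t ≤ h t) : Bop n g y ≤ Bop n h y :=
  Finset.sum_le_sum fun k hk =>
    mul_le_mul_of_nonneg_right (hgh _ (natCast_div_mem_Icc hk)) (pB_nonneg n k hy)

lemma abs_Bop_le {g h : ℝ → ℝ} (n : ℕ) (hy : y ∈ Icc (0 : ℝ) 1)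
    (hgh : ∀ t ∈ Icc (0 : ℝ) 1, |g t| ≤ h t) : |Bop n g y| ≤ Bop n h y := by
  have hupper := Bop_mono n hy fun t ht => (le_abs_self (g t)).trans (hgh t ht)
  have hlower := Bop_mono n hy fun t ht => neg_le.1 ((neg_le_abs (g t)).trans (hgh t ht))
  have hneg : Bop n (fun t => -h t) y = -Bop n h y := by
    simpa only [neg_one_mul] using Bop_const_mul n (-1) h y
  exact abs_le.2 ⟨hneg ▸ hlower, hupper⟩

end BernsteinOperator

section BinomialMoments

lemma pB_succ_zero (n : ℕ) (y : ℝ) : pB (n + 1) 0 y = (1 - y) * pB n 0 y := by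
  simp only [pB, Nat.choose_zero_right, pow_zero, Nat.sub_zero, pow_succ]
  ring

lemma pB_succ_succ (n k : ℕ) (y : ℝ) :
    pB (n + 1) (k + 1) y = y * pB n k y + (1 - y) * pB n (k + 1) y := by
  rcases lt_or_ge k n with hk | hk
  · have hpow : (1 - y) ^ (n - k) = (1 - y) ^ (n - (k + 1)) * (1 - y) := by
      rw [← pow_succ, show n - (k + 1) + 1 = n - k by lia]
    simp only [pB, Nat.choose_succ_succ', Nat.add_sub_add_right, Nat.cast_add, hpow]
    ring
  · simp only [pB, Nat.choose_succ_succ', Nat.choose_eq_zero_of_lt (Nat.lt_succ_of_le hk),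
      Nat.add_sub_add_right, add_zero, Nat.cast_zero]
    ring

/- Conditioning on the last of `n + 1` Bernoulli trials. -/
lemma sum_mul_pB_succ (φ : ℕ → ℝ) (n : ℕ) (y : ℝ) :
    ∑ k ∈ Finset.range (n + 2), φ k * pB (n + 1) k y =
      ∑ k ∈ Finset.range (n + 1), (y * φ (k + 1) + (1 - y) * φ k) * pB n k y := by
  have hlast : pB n (n + 1) y = 0 := by simp [pB]
  calc ∑ k ∈ Finset.range (n + 2), φ k * pB (n + 1) k y
      = ∑ k ∈ Finset.range (n + 1), y * φ (k + 1) * pB n k y +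
          (1 - y) * ∑ k ∈ Finset.range (n + 2), φ k * pB n k y := by
        rw [Finset.sum_range_succ', Finset.sum_range_succ' _ (n + 1), mul_add, Finset.mul_sum,
          ← add_assoc, ← Finset.sum_add_distrib, pB_succ_zero]
        congr 1
        · exact Finset.sum_congr rfl fun k _ => by rw [pB_succ_succ]; ring
        · ring
    _ = ∑ k ∈ Finset.range (n + 1), (y * φ (k + 1) + (1 - y) * φ k) * pB n k y := by
        rw [Finset.sum_range_succ _ (n + 1), hlast, mul_zero, add_zero, Finset.mul_sum,
          ← Finset.sum_add_distrib]
        exact Finset.sum_congr rfl fun k _ => by ring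

/-- The `j`-th central moment of the binomial distribution with `n` trials and success
probability `y`; divided by `n ^ j` it is the value at `y` of the Bernstein operator applied to
`fun t => (t - y) ^ j`. -/
noncomputable def binomialMoment (j n : ℕ) (y : ℝ) : ℝ :=
  ∑ k ∈ Finset.range (n + 1), (k - n * y) ^ j * pB n k y

lemma binomialMoment_succ (j n : ℕ) (y : ℝ) :
    binomialMoment j (n + 1) y = ∑ k ∈ Finset.range (n + 1),
      (y * ((k - n * y) + (1 - y)) ^ j + (1 - y) * ((k - n * y) - y) ^ j) * pB n k y := by
  rw [binomialMoment, sum_mul_pB_succ]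
  refine Finset.sum_congr rfl fun k _ => ?_
  push_cast
  ring_nf

lemma binomialMoment_zero_left (n : ℕ) (y : ℝ) : binomialMoment 0 n y = 1 := by
  induction n with
  | zero => simp [binomialMoment, pB]
  | succ n ih =>
    rw [binomialMoment_succ]
    exact (Finset.sum_congr rfl fun k _ => by ring).trans ih

lemma binomialMoment_one_left (n : ℕ) (y : ℝ) : binomialMoment 1 n y = 0 := by
  induction n with
  | zero => simp [binomialMoment]
  | succ n ih =>
    rw [binomialMoment_succ]
    exact (Finset.sum_congr rfl fun k _ => by ring).trans ih

lemma binomialMoment_two_left (n : ℕ) (y : ℝ) : binomialMoment 2 n y = n * (y * (1 - y)) := by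
  induction n with
  | zero => simp [binomialMoment]
  | succ n ih =>
    have hrec : binomialMoment 2 (n + 1) y =
        binomialMoment 2 n y + y * (1 - y) * binomialMoment 0 n y := by
      rw [binomialMoment_succ]
      simp only [binomialMoment, Finset.mul_sum, ← Finset.sum_add_distrib]
      exact Finset.sum_congr rfl fun k _ => by ring
    rw [hrec, ih, binomialMoment_zero_left]
    push_cast
    ring

lemma binomialMoment_four_left (n : ℕ) (y : ℝ) :
    binomialMoment 4 n y = n * (y * (1 - y)) * (1 + 3 * (n - 2) * (y * (1 - y))) := by
  induction n with
  | zero => simp [binomialMoment]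
  | succ n ih =>
    have hrec : binomialMoment 4 (n + 1) y =
        binomialMoment 4 n y + 6 * (y * (1 - y)) * binomialMoment 2 n y
          + 4 * (y * (1 - y) * (1 - 2 * y)) * binomialMoment 1 n y
          + y * (1 - y) * (1 - 3 * (y * (1 - y))) * binomialMoment 0 n y := by
      rw [binomialMoment_succ]
      simp only [binomialMoment, Finset.mul_sum, ← Finset.sum_add_distrib]
      exact Finset.sum_congr rfl fun k _ => by ring
    rw [hrec, ih, binomialMoment_two_left, binomialMoment_one_left, binomialMoment_zero_left]
    push_cast
    ring

lemma binomialMoment_four_le_sq (n : ℕ) {y : ℝ} (hy : y ∈ Icc (0 : ℝ) 1) :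
    binomialMoment 4 n y ≤ n ^ 2 := by
  have hv₀ : 0 ≤ y * (1 - y) := mul_nonneg hy.1 (sub_nonneg.2 hy.2)
  have hv : y * (1 - y) ≤ 1 / 4 := by nlinarith only [sq_nonneg (y - 1 / 2)]
  have hn : (n : ℝ) ≤ n ^ 2 := mod_cast Nat.le_self_pow two_ne_zero n
  calc binomialMoment 4 n y
      = n * (y * (1 - y)) * (1 + 3 * (n - 2) * (y * (1 - y))) := binomialMoment_four_left n y
    _ ≤ n * (y * (1 - y)) * (1 + 3 * n * (y * (1 - y))) := by gcongr; linarith only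
    _ ≤ n * (1 / 4) * (1 + 3 * n * (1 / 4)) := by gcongr
    _ ≤ n ^ 2 := by linarith only [hn, sq_nonneg (n : ℝ)]

variable {n : ℕ}

lemma Bop_const (n : ℕ) (c y : ℝ) : Bop n (fun _ => c) y = c := by
  have hsum := binomialMoment_zero_left n y
  simp only [binomialMoment, pow_zero, one_mul] at hsum
  rw [Bop, ← Finset.mul_sum, hsum, mul_one]

lemma Bop_sub_self_pow (hn : n ≠ 0) (j : ℕ) (y : ℝ) :
    Bop n (fun t => (t - y) ^ j) y = binomialMoment j n y / n ^ j := by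
  have hn' : (n : ℝ) ≠ 0 := Nat.cast_ne_zero.2 hn
  rw [Bop, binomialMoment, Finset.sum_div]
  refine Finset.sum_congr rfl fun k _ => ?_
  rw [show (k / n - y : ℝ) = (k - n * y) / n by field_simp, div_pow, div_mul_eq_mul_div]

lemma Bop_sub_const (hn : n ≠ 0) (x y : ℝ) : Bop n (fun t => t - x) y = y - x := by
  have hmean : Bop n (fun t => t - y) y = 0 := by
    simpa only [pow_one, binomialMoment_one_left, zero_div] using Bop_sub_self_pow hn 1 y
  have hsplit := Bop_add n (fun t => t - y) (fun _ => y - x) y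
  simpa only [sub_add_sub_cancel, hmean, Bop_const, zero_add] using hsplit

lemma Bop_sub_const_sq (hn : n ≠ 0) (x y : ℝ) :
    Bop n (fun t => (t - x) ^ 2) y = y * (1 - y) / n + (y - x) ^ 2 := by
  have hn' : (n : ℝ) ≠ 0 := Nat.cast_ne_zero.2 hn
  have hsplit : (fun t : ℝ => (t - x) ^ 2) =
      fun t => (t - y) ^ 2 + (2 * (y - x) * (t - y) + (y - x) ^ 2) := by
    funext t; ring
  rw [hsplit, Bop_add, Bop_add, Bop_const_mul, Bop_const, Bop_sub_const hn,
    Bop_sub_self_pow hn, binomialMoment_two_left]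
  field_simp
  ring

lemma Bop_sub_const_pow_four_le (hn : n ≠ 0) (x : ℝ) {y : ℝ} (hy : y ∈ Icc (0 : ℝ) 1) :
    Bop n (fun t => (t - x) ^ 4) y ≤ 8 * (1 / n ^ 2 + (y - x) ^ 4) := by
  have hcentral : Bop n (fun t => (t - y) ^ 4) y ≤ 1 / n ^ 2 := by
    rw [Bop_sub_self_pow hn, div_le_div_iff₀ (by positivity) (by positivity), one_mul]
    calc binomialMoment 4 n y * (n : ℝ) ^ 2 ≤ n ^ 2 * n ^ 2 := by
          gcongr; exact binomialMoment_four_le_sq n hy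
      _ = (n : ℝ) ^ 4 := by ring
  calc Bop n (fun t => (t - x) ^ 4) y
      ≤ Bop n (fun t => 8 * ((t - y) ^ 4 + (y - x) ^ 4)) y :=
        Bop_mono n hy fun t _ => by
          simpa [show (2 : ℝ) ^ 3 = 8 by norm_num] using
            (even_two_mul 2).add_pow_le (a := t - y) (b := y - x)
    _ = 8 * (Bop n (fun t => (t - y) ^ 4) y + (y - x) ^ 4) := by
        rw [Bop_const_mul, Bop_add, Bop_const]
    _ ≤ 8 * (1 / n ^ 2 + (y - x) ^ 4) := by gcongr

end BinomialMoments

section Taylor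

lemma isLittleO_taylor_two {g : ℝ → ℝ} {x : ℝ} (hg : ∀ᶠ t in 𝓝 x, DifferentiableAt ℝ g t)
    (hg' : DifferentiableAt ℝ (deriv g) x) :
    (fun t => g t - g x - deriv g x * (t - x) - deriv (deriv g) x / 2 * (t - x) ^ 2)
      =o[𝓝 x] fun t => (t - x) ^ 2 := by
  obtain ⟨δ, hδ, hball⟩ := Metric.eventually_nhds_iff_ball.1 hg
  have hderiv : ∀ t ∈ Metric.ball x δ, HasDerivWithinAt
      (fun t => g t - deriv g x * (t - x) - deriv (deriv g) x / 2 * (t - x) ^ 2)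
      (deriv g t - deriv g x - (t - x) * deriv (deriv g) x) (Metric.ball x δ) t := by
    intro t ht
    have hid : HasDerivAt (fun t => t - x) 1 t := (hasDerivAt_id t).sub_const x
    refine (((hball t ht).hasDerivAt.sub (hid.const_mul (deriv g x))).sub
      ((hid.pow 2).const_mul (deriv (deriv g) x / 2))).hasDerivWithinAt.congr_deriv ?_
    push_cast
    ring
  have hfirst : (fun t => deriv g t - deriv g x - (t - x) * deriv (deriv g) x)
      =o[𝓝[Metric.ball x δ] x] fun t => (t - x) ^ 1 := by
    simpa only [pow_one, smul_eq_mul] using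
      (hasDerivAt_iff_isLittleO.1 hg'.hasDerivAt).mono nhdsWithin_le_nhds
  have hsecond := (convex_ball x δ).isLittleO_pow_succ_real (Metric.mem_ball_self hδ) hderiv hfirst
  rw [Metric.isOpen_ball.nhdsWithin_eq (Metric.mem_ball_self hδ)] at hsecond
  refine hsecond.congr_left fun t => ?_
  ring

lemma exists_abs_le_sq_add_pow_four {r : ℝ → ℝ} {s : Set ℝ} {x M ε : ℝ}
    (hM : ∀ t ∈ s, |r t| ≤ M) (hr : r =o[𝓝 x] fun t => (t - x) ^ 2) (hε : 0 < ε) :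
    ∃ C, ∀ t ∈ s, |r t| ≤ ε * (t - x) ^ 2 + C * (t - x) ^ 4 := by
  obtain ⟨δ, hδ, hnear⟩ := Metric.eventually_nhds_iff.1 (hr.def hε)
  refine ⟨M / δ ^ 4, fun t ht => ?_⟩
  have hM₀ : 0 ≤ M := (abs_nonneg _).trans (hM t ht)
  rcases lt_or_ge |t - x| δ with hlt | hge
  · have hle : |r t| ≤ ε * (t - x) ^ 2 := by
      simpa only [norm_eq_abs, abs_pow, sq_abs] using hnear (y := t) hlt
    exact hle.trans (le_add_of_nonneg_right (by positivity))
  · have hpow : δ ^ 4 ≤ (t - x) ^ 4 := by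
      rw [← Even.pow_abs (by decide : Even 4) (t - x)]
      gcongr
    calc |r t| ≤ M / δ ^ 4 * δ ^ 4 := by rw [div_mul_cancel₀ _ (by positivity)]; exact hM t ht
      _ ≤ M / δ ^ 4 * (t - x) ^ 4 := by gcongr
      _ ≤ ε * (t - x) ^ 2 + M / δ ^ 4 * (t - x) ^ 4 := le_add_of_nonneg_left (by positivity)

end Taylor

section Voronovskaja

variable {x d : ℝ} {y : ℕ → ℝ}

lemma tendsto_of_tendsto_nat_mul_sub
    (hd : Tendsto (fun n : ℕ => (n : ℝ) * (y n - x)) atTop (𝓝 d)) : Tendsto y atTop (𝓝 x) := by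
  have hnorm : Tendsto (fun n : ℕ => ‖(n : ℝ)‖) atTop atTop := by
    simpa only [norm_natCast] using tendsto_natCast_atTop_atTop
  exact tendsto_sub_nhds_zero_iff.1 (tangentConeAt.lim_zero atTop hnorm hd)

lemma tendsto_nat_mul_Bop_sub_const
    (hd : Tendsto (fun n : ℕ => (n : ℝ) * (y n - x)) atTop (𝓝 d)) :
    Tendsto (fun n : ℕ => (n : ℝ) * Bop n (fun t => t - x) (y n)) atTop (𝓝 d) := by
  refine hd.congr' ?_
  filter_upwards [eventually_ne_atTop 0] with n hn
  rw [Bop_sub_const hn]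

lemma tendsto_nat_mul_Bop_sub_const_sq
    (hd : Tendsto (fun n : ℕ => (n : ℝ) * (y n - x)) atTop (𝓝 d)) :
    Tendsto (fun n : ℕ => (n : ℝ) * Bop n (fun t => (t - x) ^ 2) (y n)) atTop
      (𝓝 (x * (1 - x))) := by
  have hy := tendsto_of_tendsto_nat_mul_sub hd
  have hlim := (hy.mul (hy.const_sub 1)).add (hd.mul (hy.sub_const x))
  rw [sub_self, mul_zero, add_zero] at hlim
  refine hlim.congr' ?_
  filter_upwards [eventually_ne_atTop 0] with n hn
  have hn' : (n : ℝ) ≠ 0 := Nat.cast_ne_zero.2 hn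
  rw [Bop_sub_const_sq hn]
  field_simp

lemma tendsto_nat_mul_Bop_sub_const_pow_four (hy : ∀ᶠ n in atTop, y n ∈ Icc (0 : ℝ) 1)
    (hd : Tendsto (fun n : ℕ => (n : ℝ) * (y n - x)) atTop (𝓝 d)) :
    Tendsto (fun n : ℕ => (n : ℝ) * Bop n (fun t => (t - x) ^ 4) (y n)) atTop (𝓝 0) := by
  have hbound : Tendsto (fun n : ℕ => 8 * ((n : ℝ)⁻¹ + n * (y n - x) * (y n - x) ^ 3)) atTop
      (𝓝 0) := by
    have hyx := (tendsto_of_tendsto_nat_mul_sub hd).sub_const x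
    simpa using
      ((tendsto_inv_atTop_nhds_zero_nat (𝕜 := ℝ)).add (hd.mul (hyx.pow 3))).const_mul 8
  refine squeeze_zero' ?_ ?_ hbound
  · filter_upwards [hy] with n hyn
    have hnonneg := Bop_mono n hyn fun t _ => Even.pow_nonneg (by decide : Even 4) (t - x)
    rw [Bop_const] at hnonneg
    positivity
  · filter_upwards [hy, eventually_ne_atTop 0] with n hyn hn
    have hn' : (n : ℝ) ≠ 0 := Nat.cast_ne_zero.2 hn
    calc (n : ℝ) * Bop n (fun t => (t - x) ^ 4) (y n)
        ≤ n * (8 * (1 / n ^ 2 + (y n - x) ^ 4)) := by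
          gcongr; exact Bop_sub_const_pow_four_le hn x hyn
      _ = 8 * ((n : ℝ)⁻¹ + n * (y n - x) * (y n - x) ^ 3) := by field_simp

lemma tendsto_nat_mul_Bop_of_isLittleO {r : ℝ → ℝ} {M : ℝ}
    (hy : ∀ᶠ n in atTop, y n ∈ Icc (0 : ℝ) 1)
    (hd : Tendsto (fun n : ℕ => (n : ℝ) * (y n - x)) atTop (𝓝 d))
    (hM : ∀ t ∈ Icc (0 : ℝ) 1, |r t| ≤ M) (hr : r =o[𝓝 x] fun t => (t - x) ^ 2) :
    Tendsto (fun n : ℕ => (n : ℝ) * Bop n r (y n)) atTop (𝓝 0) := by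
  refine Metric.tendsto_nhds.2 fun ε hε => ?_
  obtain ⟨C, hC⟩ := exists_abs_le_sq_add_pow_four hM hr hε
  have hbound := ((tendsto_nat_mul_Bop_sub_const_sq hd).const_mul ε).add
    ((tendsto_nat_mul_Bop_sub_const_pow_four hy hd).const_mul C)
  have hlt : ε * (x * (1 - x)) + C * 0 < ε := by
    nlinarith only [hε, mul_nonneg hε.le (sq_nonneg (x - 1 / 2))]
  filter_upwards [hy, hbound.eventually_lt_const hlt] with n hyn hsmall
  rw [dist_zero_right, norm_eq_abs, abs_mul, Nat.abs_cast]
  calc (n : ℝ) * |Bop n r (y n)|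
      ≤ n * Bop n (fun t => ε * (t - x) ^ 2 + C * (t - x) ^ 4) (y n) := by
        gcongr; exact abs_Bop_le n hyn hC
    _ = ε * (n * Bop n (fun t => (t - x) ^ 2) (y n)) +
          C * (n * Bop n (fun t => (t - x) ^ 4) (y n)) := by
        rw [Bop_add, Bop_const_mul, Bop_const_mul]; ring
    _ < ε := hsmall

theorem voronovskaja_Bop {g : ℝ → ℝ} (hy : ∀ᶠ n in atTop, y n ∈ Icc (0 : ℝ) 1)
    (hd : Tendsto (fun n : ℕ => (n : ℝ) * (y n - x)) atTop (𝓝 d))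
    (hgc : ContinuousOn g (Icc 0 1)) (hg : ∀ᶠ t in 𝓝 x, DifferentiableAt ℝ g t)
    (hg' : DifferentiableAt ℝ (deriv g) x) :
    Tendsto (fun n : ℕ => (n : ℝ) * (Bop n g (y n) - g x)) atTop
      (𝓝 (deriv g x * d + deriv (deriv g) x / 2 * (x * (1 - x)))) := by
  set r : ℝ → ℝ := fun t =>
    g t - g x - deriv g x * (t - x) - deriv (deriv g) x / 2 * (t - x) ^ 2 with hr
  have hrc : ContinuousOn r (Icc 0 1) := by fun_prop
  obtain ⟨M, hM⟩ := isCompact_Icc.exists_bound_of_continuousOn hrc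
  have hrem := tendsto_nat_mul_Bop_of_isLittleO hy hd hM (isLittleO_taylor_two hg hg')
  have hlim := (((tendsto_nat_mul_Bop_sub_const hd).const_mul (deriv g x)).add
    ((tendsto_nat_mul_Bop_sub_const_sq hd).const_mul (deriv (deriv g) x / 2))).add hrem
  rw [add_zero] at hlim
  refine hlim.congr fun n => ?_
  have hsplit : g = fun t =>
      g x + (deriv g x * (t - x) + (deriv (deriv g) x / 2 * (t - x) ^ 2 + r t)) := by
    funext t; simp only [hr]; ring
  have hB : Bop n g (y n) = g x + (deriv g x * Bop n (fun t => t - x) (y n) +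
      (deriv (deriv g) x / 2 * Bop n (fun t => (t - x) ^ 2) (y n) + Bop n r (y n))) := by
    conv_lhs => rw [hsplit]
    rw [Bop_add, Bop_add, Bop_add, Bop_const, Bop_const_mul, Bop_const_mul]
  rw [hB]
  ring

end Voronovskaja

section ComparisonPrinciple

variable {y : ℕ → ℝ → ℝ} {d : ℝ → ℝ}

/- At an interior maximum `ξ` of `G + ε t`, positivity of `Bop` bounds the limit for `G` above by
`-ε * d ξ < 0`. -/
lemma nonpos_of_tendsto_nat_mul_Bop_sub {G : ℝ → ℝ} (hd_pos : ∀ x ∈ Ioo (0 : ℝ) 1, 0 < d x)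
    (hy : ∀ x ∈ Ioo (0 : ℝ) 1, ∀ᶠ n in atTop, y n x ∈ Icc (0 : ℝ) 1)
    (hd : ∀ x ∈ Ioo (0 : ℝ) 1, Tendsto (fun n : ℕ => (n : ℝ) * (y n x - x)) atTop (𝓝 (d x)))
    (hG : ContinuousOn G (Icc 0 1)) (h₀ : G 0 ≤ 0) (h₁ : G 1 ≤ 0)
    (hlim : ∀ x ∈ Ioo (0 : ℝ) 1,
      Tendsto (fun n : ℕ => (n : ℝ) * (Bop n G (y n x) - G x)) atTop (𝓝 0)) :
    ∀ x ∈ Icc (0 : ℝ) 1, G x ≤ 0 := by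
  intro x₀ hx₀
  by_contra! hpos
  obtain ⟨ε, hε, hεG⟩ := exists_between hpos
  obtain ⟨ξ, hξ, hmax⟩ := isCompact_Icc.exists_isMaxOn ⟨x₀, hx₀⟩
    (show ContinuousOn (fun t => G t + ε * t) (Icc 0 1) by fun_prop)
  have hle : ∀ t ∈ Icc (0 : ℝ) 1, G t + ε * t ≤ G ξ + ε * ξ := fun t ht => hmax ht
  have hξG : ε < G ξ + ε * ξ := by
    linarith only [hle x₀ hx₀, hεG, mul_nonneg hε.le hx₀.1]
  have hξ₀ : ξ ≠ 0 := by rintro rfl; linarith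
  have hξ₁ : ξ ≠ 1 := by rintro rfl; linarith
  have hξ' : ξ ∈ Ioo (0 : ℝ) 1 := ⟨hξ.1.lt_of_ne' hξ₀, hξ.2.lt_of_ne hξ₁⟩
  have hbound : ∀ᶠ n : ℕ in atTop,
      (n : ℝ) * (Bop n G (y n ξ) - G ξ) ≤ -ε * (n * Bop n (fun t => t - ξ) (y n ξ)) := by
    filter_upwards [hy ξ hξ'] with n hyn
    have hB := Bop_mono (g := G) (h := fun t => G ξ + -ε * (t - ξ)) n hyn
      fun t ht => by linarith only [hle t ht]
    rw [Bop_add, Bop_const, Bop_const_mul] at hB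
    calc (n : ℝ) * (Bop n G (y n ξ) - G ξ) ≤ n * (-ε * Bop n (fun t => t - ξ) (y n ξ)) := by
          gcongr; linarith only [hB]
      _ = -ε * (n * Bop n (fun t => t - ξ) (y n ξ)) := by ring
  have hzero_le : 0 ≤ -ε * d ξ := le_of_tendsto_of_tendsto (hlim ξ hξ')
    ((tendsto_nat_mul_Bop_sub_const (hd ξ hξ')).const_mul (-ε)) hbound
  linarith only [hzero_le, mul_pos hε (hd_pos ξ hξ')]

lemma le_of_tendsto_nat_mul_Bop_sub {g h : ℝ → ℝ} (hd_pos : ∀ x ∈ Ioo (0 : ℝ) 1, 0 < d x)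
    (hy : ∀ x ∈ Ioo (0 : ℝ) 1, ∀ᶠ n in atTop, y n x ∈ Icc (0 : ℝ) 1)
    (hd : ∀ x ∈ Ioo (0 : ℝ) 1, Tendsto (fun n : ℕ => (n : ℝ) * (y n x - x)) atTop (𝓝 (d x)))
    (hg : ContinuousOn g (Icc 0 1)) (hh : ContinuousOn h (Icc 0 1))
    (h₀ : g 0 ≤ h 0) (h₁ : g 1 ≤ h 1)
    (hglim : ∀ x ∈ Ioo (0 : ℝ) 1,
      Tendsto (fun n : ℕ => (n : ℝ) * (Bop n g (y n x) - g x)) atTop (𝓝 0))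
    (hhlim : ∀ x ∈ Ioo (0 : ℝ) 1,
      Tendsto (fun n : ℕ => (n : ℝ) * (Bop n h (y n x) - h x)) atTop (𝓝 0)) :
    ∀ x ∈ Icc (0 : ℝ) 1, g x ≤ h x := by
  have hnonpos := nonpos_of_tendsto_nat_mul_Bop_sub hd_pos hy hd (hg.fun_sub hh)
    (sub_nonpos.2 h₀) (sub_nonpos.2 h₁) fun x hx => by
      have hlim := (hglim x hx).sub (hhlim x hx)
      rw [sub_self] at hlim
      exact hlim.congr fun n => by rw [Bop_sub]; ring
  exact fun x hx => sub_nonpos.1 (hnonpos x hx)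

end ComparisonPrinciple

section Saturation

/-- `g` is twice differentiable at `x` and satisfies `g' + m g'' = 0` there; a classical solution
on an open set is a solution at each of its points. -/
def IsSolutionAt (m : ℝ) (g : ℝ → ℝ) (x : ℝ) : Prop :=
  DifferentiableAt ℝ g x ∧ DifferentiableAt ℝ (deriv g) x ∧ deriv g x + m * deriv (deriv g) x = 0

variable {m : ℝ}

lemma IsSolutionAt.congr_of_eventuallyEq {g h : ℝ → ℝ} {x : ℝ} (hh : IsSolutionAt m h x)
    (hgh : g =ᶠ[𝓝 x] h) : IsSolutionAt m g x := by
  refine ⟨hh.1.congr_of_eventuallyEq hgh, hh.2.1.congr_of_eventuallyEq hgh.deriv, ?_⟩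
  rw [hgh.deriv_eq, hgh.deriv.deriv_eq, hh.2.2]

lemma isSolutionAt_add_mul_exp (hm : m ≠ 0) (A B x : ℝ) :
    IsSolutionAt m (fun t => A + B * exp (-t / m)) x := by
  have hexp : ∀ t, HasDerivAt (fun t => exp (-t / m)) (-1 / m * exp (-t / m)) t := fun t => by
    simpa only [mul_comm] using ((hasDerivAt_neg t).div_const m).exp
  have hderiv : deriv (fun t => A + B * exp (-t / m)) = fun t => B * (-1 / m * exp (-t / m)) :=
    funext fun t => (((hexp t).const_mul B).const_add A).deriv
  have hderiv₂ : HasDerivAt (deriv fun t => A + B * exp (-t / m))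
      (B * (-1 / m * (-1 / m * exp (-x / m)))) x :=
    hderiv ▸ ((hexp x).const_mul (-1 / m)).const_mul B
  refine ⟨by fun_prop, hderiv₂.differentiableAt, ?_⟩
  rw [hderiv₂.deriv, hderiv]
  field_simp
  ring

lemma exists_add_mul_exp_eq (hm : m ≠ 0) (u v : ℝ) :
    ∃ A B : ℝ, A + B * exp (-0 / m) = u ∧ A + B * exp (-1 / m) = v := by
  have hne : exp (-1 / m) - 1 ≠ 0 := by
    rw [sub_ne_zero, Ne, exp_eq_one_iff]
    exact div_ne_zero (by norm_num) hm
  refine ⟨u - (v - u) / (exp (-1 / m) - 1), (v - u) / (exp (-1 / m) - 1), by simp, ?_⟩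
  linear_combination div_mul_cancel₀ (v - u) hne

variable {y : ℕ → ℝ → ℝ} {g : ℝ → ℝ}

lemma tendsto_nat_mul_Bop_sub_of_isSolutionAt {x : ℝ} {y : ℕ → ℝ} (hm : m ≠ 0)
    (hy : ∀ᶠ n in atTop, y n ∈ Icc (0 : ℝ) 1)
    (hd : Tendsto (fun n : ℕ => (n : ℝ) * (y n - x)) atTop (𝓝 (x * (1 - x) / (2 * m))))
    (hgc : ContinuousOn g (Icc 0 1)) (hg : ∀ᶠ t in 𝓝 x, IsSolutionAt m g t) :
    Tendsto (fun n : ℕ => (n : ℝ) * (Bop n g (y n) - g x)) atTop (𝓝 0) := by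
  obtain ⟨-, hg', hode⟩ := hg.self_of_nhds
  have hlim := voronovskaja_Bop hy hd hgc (hg.mono fun _ ht => ht.1) hg'
  have hzero : deriv g x * (x * (1 - x) / (2 * m)) + deriv (deriv g) x / 2 * (x * (1 - x)) = 0 := by
    field_simp
    linear_combination x * (1 - x) * hode
  rwa [hzero] at hlim

theorem saturation_Bop (hm : 0 < m)
    (hy : ∀ x ∈ Ioo (0 : ℝ) 1, ∀ᶠ n in atTop, y n x ∈ Icc (0 : ℝ) 1)
    (hd : ∀ x ∈ Ioo (0 : ℝ) 1,
      Tendsto (fun n : ℕ => (n : ℝ) * (y n x - x)) atTop (𝓝 (x * (1 - x) / (2 * m))))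
    (hg : ContinuousOn g (Icc 0 1)) :
    (∀ x ∈ Ioo (0 : ℝ) 1,
      Tendsto (fun n : ℕ => (n : ℝ) * (Bop n g (y n x) - g x)) atTop (𝓝 0)) ↔
    ∀ x ∈ Ioo (0 : ℝ) 1, IsSolutionAt m g x := by
  constructor
  · intro hlim
    have hd_pos : ∀ x ∈ Ioo (0 : ℝ) 1, 0 < x * (1 - x) / (2 * m) := fun x hx =>
      div_pos (mul_pos hx.1 (sub_pos.2 hx.2)) (by positivity)
    obtain ⟨A, B, h₀, h₁⟩ := exists_add_mul_exp_eq hm.ne' (g 0) (g 1)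
    set h : ℝ → ℝ := fun t => A + B * exp (-t / m)
    have hsol : ∀ x, IsSolutionAt m h x := isSolutionAt_add_mul_exp hm.ne' A B
    have hhc : ContinuousOn h (Icc 0 1) := by fun_prop
    have hhlim := fun x hx => tendsto_nat_mul_Bop_sub_of_isSolutionAt hm.ne' (hy x hx) (hd x hx)
      hhc (.of_forall hsol)
    have hgh : EqOn g h (Icc 0 1) := fun x hx => le_antisymm
      (le_of_tendsto_nat_mul_Bop_sub hd_pos hy hd hg hhc h₀.ge h₁.ge hlim hhlim x hx)
      (le_of_tendsto_nat_mul_Bop_sub hd_pos hy hd hhc hg h₀.le h₁.le hhlim hlim x hx)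
    exact fun x hx => (hsol x).congr_of_eventuallyEq
      (hgh.eventuallyEq_of_mem (Icc_mem_nhds hx.1 hx.2))
  · exact fun hsol x hx => tendsto_nat_mul_Bop_sub_of_isSolutionAt hm.ne' (hy x hx) (hd x hx) hg
      (eventually_of_mem (isOpen_Ioo.mem_nhds hx) hsol)

end Saturation

section EvaluationPoints

lemma tendsto_log_one_add_mul_sub_div_sq (x : ℝ) :
    Tendsto (fun u => (log (1 + x * u) - x * u) / u ^ 2) (𝓝[≠] 0) (𝓝 (-x ^ 2 / 2)) := by
  have htaylor := isLittleO_taylor_two (g := log) (x := 1)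
    ((eventually_ne_nhds one_ne_zero).mono fun t ht => differentiableAt_log ht)
    (by simpa only [deriv_log'] using differentiableAt_inv one_ne_zero)
  have hu : Tendsto (fun u : ℝ => 1 + x * u) (𝓝[≠] 0) (𝓝 1) :=
    (Continuous.tendsto' (by fun_prop) 0 1 (by simp)).mono_left nhdsWithin_le_nhds
  have hrem : (fun u => log (1 + x * u) - x * u + (x * u) ^ 2 / 2) =o[𝓝[≠] 0] fun u => u ^ 2 := by
    have hbigO : (fun u : ℝ => (x * u) ^ 2) =O[𝓝[≠] 0] fun u => u ^ 2 := by
      simpa only [mul_pow] using (isBigO_refl _ _).const_mul_left (x ^ 2)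
    refine ((htaylor.comp_tendsto hu).congr (fun u => ?_) fun u => ?_).trans_isBigO hbigO
    · simp only [Function.comp_apply, deriv_log', deriv_inv, log_one]
      ring
    · simp only [Function.comp_apply, add_sub_cancel_left]
  have hlim := hrem.tendsto_div_nhds_zero.add_const (-x ^ 2 / 2)
  rw [zero_add] at hlim
  refine hlim.congr' ?_
  filter_upwards [self_mem_nhdsWithin] with u hu₀
  have hu₀ : u ≠ 0 := hu₀
  field_simp
  ring

lemma tendsto_log_one_add_div : Tendsto (fun u => log (1 + u) / u) (𝓝[≠] 0) (𝓝 1) := by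
  simpa [div_eq_inv_mul] using (hasDerivAt_log one_ne_zero).tendsto_slope_zero

lemma tendsto_log_div_log_sub_div (x : ℝ) :
    Tendsto (fun u => (log (1 + x * u) / log (1 + u) - x) / u) (𝓝[≠] 0)
      (𝓝 (x * (1 - x) / 2)) := by
  have hone : Tendsto (fun u => (log (1 + u) - u) / u ^ 2) (𝓝[≠] 0) (𝓝 (-1 / 2)) := by
    simpa using tendsto_log_one_add_mul_sub_div_sq 1
  have hlim := ((tendsto_log_one_add_mul_sub_div_sq x).sub (hone.const_mul x)).div
    tendsto_log_one_add_div one_ne_zero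
  rw [show (-x ^ 2 / 2 - x * (-1 / 2)) / 1 = x * (1 - x) / 2 by ring] at hlim
  refine hlim.congr' ?_
  filter_upwards [self_mem_nhdsWithin, tendsto_log_one_add_div.eventually_ne one_ne_zero]
    with u hu₀ hlog
  have hu₀ : u ≠ 0 := hu₀
  have hlog : log (1 + u) ≠ 0 := fun h => hlog (by rw [h, zero_div])
  simp only [Pi.div_apply]
  field_simp
  ring

variable {μ : ℝ}

lemma aFun_mem_Icc (hμ : -1 < μ) {n : ℕ} (hn : n ≠ 0) {x : ℝ} (hx : x ∈ Icc (0 : ℝ) 1) :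
    aFun μ n x ∈ Icc (0 : ℝ) 1 := by
  have hμ' : 0 < 1 + μ := by linarith
  have hnum : 0 ≤ x / (n * (1 + μ)) := div_nonneg hx.1 (by positivity)
  have hle : x / (n * (1 + μ)) ≤ 1 / (n * (1 + μ)) := by gcongr; exact hx.2
  have hden : 0 < log (1 + 1 / (n * (1 + μ))) := log_pos (lt_add_of_pos_right 1 (by positivity))
  refine ⟨div_nonneg (log_nonneg (by linarith)) hden.le, (div_le_one hden).2 ?_⟩
  gcongr

lemma tendsto_nat_mul_aFun_sub (hμ : 1 + μ ≠ 0) (x : ℝ) :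
    Tendsto (fun n : ℕ => (n : ℝ) * (aFun μ n x - x)) atTop (𝓝 (x * (1 - x) / (2 * (1 + μ)))) := by
  have hu : Tendsto (fun n : ℕ => 1 / ((n : ℝ) * (1 + μ))) atTop (𝓝[≠] 0) := by
    refine tendsto_nhdsWithin_iff.2 ⟨?_, ?_⟩
    · simpa [mul_comm] using
        (tendsto_inv_atTop_nhds_zero_nat (𝕜 := ℝ)).const_mul (1 + μ)⁻¹
    · filter_upwards [eventually_ne_atTop 0] with n hn
      exact one_div_ne_zero (mul_ne_zero (Nat.cast_ne_zero.2 hn) hμ)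
  have hlim := ((tendsto_log_div_log_sub_div x).comp hu).div_const (1 + μ)
  rw [div_div] at hlim
  refine hlim.congr fun n => ?_
  simp only [Function.comp_apply, mul_one_div, aFun]
  field_simp

end EvaluationPoints

section LogarithmicOperator

variable {μ : ℝ}

lemma logμ_pos {t : ℝ} (ht : 0 < μ + t) : 0 < logμ μ t :=
  log_pos (by linarith only [ht])

lemma continuousOn_logμ (hμ : -1 < μ) : ContinuousOn (logμ μ) (Ici 0) :=
  ContinuousOn.log (by fun_prop) fun _ ht =>
    (add_pos_of_pos_of_nonneg (neg_lt_iff_pos_add'.1 hμ) ht).ne'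

lemma Lop_eq_mul_Bop (μ : ℝ) (n : ℕ) (f : ℝ → ℝ) (x : ℝ) :
    Lop μ n f x = logμ μ x * Bop n (fun t => f t / logμ μ t) (aFun μ n x) := by
  simp only [Lop, Bop, mul_one_div]

lemma tendsto_nat_mul_Lop_sub_iff {x : ℝ} (hx : logμ μ x ≠ 0) (f : ℝ → ℝ) :
    Tendsto (fun n : ℕ => (n : ℝ) * (Lop μ n f x - f x)) atTop (𝓝 0) ↔
      Tendsto (fun n : ℕ => (n : ℝ) *
        (Bop n (fun t => f t / logμ μ t) (aFun μ n x) - f x / logμ μ x)) atTop (𝓝 0) := by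
  have hfactor : ∀ n : ℕ, (n : ℝ) * (Lop μ n f x - f x) = logμ μ x *
      (n * (Bop n (fun t => f t / logμ μ t) (aFun μ n x) - f x / logμ μ x)) := fun n => by
    rw [Lop_eq_mul_Bop]
    field_simp
  simp only [hfactor]
  exact ⟨fun h => by simpa [hx] using h.const_mul (logμ μ x)⁻¹,
    fun h => by simpa using h.const_mul (logμ μ x)⟩

end LogarithmicOperator

theorem stmt13 (μ : ℝ) (hμ : 0 < μ) (f : ℝ → ℝ)
    (hf : ContinuousOn f (Set.Icc (0:ℝ) 1)) :
    (∀ x ∈ Set.Ioo (0:ℝ) 1,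
      Tendsto (fun n : ℕ => (n : ℝ) * (Lop μ n f x - f x)) atTop (nhds 0)) ↔
    (∀ x ∈ Set.Ioo (0:ℝ) 1,
      DifferentiableAt ℝ (fun t => f t / logμ μ t) x ∧
      DifferentiableAt ℝ (deriv (fun t => f t / logμ μ t)) x ∧
      deriv (fun t => f t / logμ μ t) x
        + (1 + μ) * deriv (deriv (fun t => f t / logμ μ t)) x = 0) := by
  have hg : ContinuousOn (fun t => f t / logμ μ t) (Icc 0 1) :=
    hf.div ((continuousOn_logμ (by linarith)).mono Icc_subset_Ici_self) fun t ht =>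
      (logμ_pos (add_pos_of_pos_of_nonneg hμ ht.1)).ne'
  have hmem : ∀ x ∈ Ioo (0 : ℝ) 1, ∀ᶠ n in atTop, aFun μ n x ∈ Icc (0 : ℝ) 1 := fun x hx =>
    (eventually_ne_atTop 0).mono fun n hn =>
      aFun_mem_Icc (by linarith) hn (Ioo_subset_Icc_self hx)
  have hdrift : ∀ x ∈ Ioo (0 : ℝ) 1, Tendsto (fun n : ℕ => (n : ℝ) * (aFun μ n x - x)) atTop
      (𝓝 (x * (1 - x) / (2 * (1 + μ)))) := fun x _ => tendsto_nat_mul_aFun_sub (by positivity) x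
  exact (forall₂_congr fun x hx =>
    tendsto_nat_mul_Lop_sub_iff (logμ_pos (add_pos hμ hx.1)).ne' f).trans
    (saturation_Bop (by positivity) hmem hdrift hg)
end

section
/- Let μ > 0, n a positive integer, f : [0,1] → ℝ, and x ∈ [0,1]. Then the derivative of x ↦ L_n(f, x)/ln_μ(x) satisfies (L_n f / ln_μ)'(x) = a_n'(x) · Σ_{k=0}^{n−1} Δ₁ f_μ(k/n) · p_{n−1,k}(a_n(x)), where Δ₁ f_μ(k/n) := n·( f_μ((k+1)/n) − f_μ(k/n) ) and f_μ(t) := f(t)/ln(1+μ+t). -/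
open Real Filter Set

/-!
Dividing by `ln_μ` cancels the prefactor of `L_n` and leaves the classical Bernstein operator `B_n`
applied to `f_μ` and composed with `a_n`, so the formula is the chain rule once `B_n g` has been
differentiated. That derivative is a summation by parts, because the derivative of `p_{n,k+1}` is
`n (p_{n-1,k} - p_{n-1,k+1})`.
-/

section Bernstein

theorem derivative_sum_smul_bernsteinPolynomial {R : Type*} [CommRing R] (c : ℕ → R) (n : ℕ) :
    (∑ k ∈ Finset.range (n + 1), c k • bernsteinPolynomial R n k).derivative =
      ∑ k ∈ Finset.range n, ((n : R) * (c (k + 1) - c k)) • bernsteinPolynomial R (n - 1) k := by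
  set b := bernsteinPolynomial R (n - 1) with hb
  have boundary : (n : R) • (c n • b n) = 0 := by
    rcases n.eq_zero_or_pos with rfl | hn
    · rw [Nat.cast_zero, zero_smul]
    · rw [hb, bernsteinPolynomial.eq_zero_of_lt R (Nat.sub_one_lt_of_lt hn), smul_zero, smul_zero]
  have telescope : ∑ k ∈ Finset.range n, (c k • b k - c (k + 1) • b (k + 1)) =
      c 0 • b 0 - c n • b n := Finset.sum_range_sub' (fun k => c k • b k) n
  calc
    _ = ∑ k ∈ Finset.range n, c (k + 1) • (n * (b k - b (k + 1))) + c 0 • (-n * b 0) := by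
      simp only [Finset.sum_range_succ', Polynomial.derivative_add, Polynomial.derivative_sum,
        Polynomial.derivative_smul, bernsteinPolynomial.derivative_succ,
        bernsteinPolynomial.derivative_zero, hb]
    _ = ∑ k ∈ Finset.range n, ((n : R) * (c (k + 1) - c k)) • b k +
          (n : R) • (∑ k ∈ Finset.range n, (c k • b k - c (k + 1) • b (k + 1)) - c 0 • b 0) := by
      rw [smul_sub, Finset.smul_sum, ← add_sub_assoc, ← Finset.sum_add_distrib, sub_eq_add_neg]
      simp only [Polynomial.smul_eq_C_mul, map_mul, map_sub, map_natCast]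
      congr 1
      · exact Finset.sum_congr rfl fun k _ => by ring
      · ring
    _ = ∑ k ∈ Finset.range n, ((n : R) * (c (k + 1) - c k)) • b k := by
      rw [telescope, sub_sub_cancel_left, smul_neg, boundary, neg_zero, add_zero]

theorem pB_eq_eval_bernsteinPolynomial (n k : ℕ) (y : ℝ) :
    pB n k y = (bernsteinPolynomial ℝ n k).eval y := by
  simp [pB, bernsteinPolynomial]

theorem Bop_eq_eval_sum_smul_bernsteinPolynomial (n : ℕ) (g : ℝ → ℝ) (y : ℝ) :
    Bop n g y =
      (∑ k ∈ Finset.range (n + 1), g ((k : ℝ) / n) • bernsteinPolynomial ℝ n k).eval y := by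
  simp only [Bop, Polynomial.eval_finsetSum, Polynomial.eval_smul, smul_eq_mul,
    pB_eq_eval_bernsteinPolynomial]

theorem hasDerivAt_Bop (n : ℕ) (g : ℝ → ℝ) (y : ℝ) :
    HasDerivAt (Bop n g)
      (∑ k ∈ Finset.range n, (n * (g ((k + 1) / n) - g (k / n))) * pB (n - 1) k y) y := by
  rw [funext (Bop_eq_eval_sum_smul_bernsteinPolynomial n g)]
  refine (Polynomial.hasDerivAt _ y).congr_deriv ?_
  rw [derivative_sum_smul_bernsteinPolynomial (fun k => g ((k : ℝ) / n))]
  simp only [Polynomial.eval_finsetSum, Polynomial.eval_smul, smul_eq_mul,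
    ← pB_eq_eval_bernsteinPolynomial, Nat.cast_add_one]

end Bernstein

section Logarithmic

theorem one_add_div_mul_pos {K : Type*} [Field K] [LinearOrder K] [IsStrictOrderedRing K]
    {a c x : K} (ha : 0 < a) (hc : 1 ≤ c) (hx : 0 < a + x) : 0 < 1 + x / (c * a) := by
  have hac : a ≤ c * a := le_mul_of_one_le_left ha.le hc
  rw [← neg_lt_iff_pos_add', lt_div_iff₀ (ha.trans_le hac)]
  linarith

variable {μ x : ℝ}

theorem Lop_div_logμ (hlog : logμ μ x ≠ 0) (n : ℕ) (f : ℝ → ℝ) :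
    Lop μ n f x / logμ μ x = Bop n (fun t => f t / logμ μ t) (aFun μ n x) := by
  simp only [Lop, Bop, mul_div_cancel_left₀ _ hlog, mul_one_div]

theorem continuousAt_logμ (hx : 1 + μ + x ≠ 0) : ContinuousAt (logμ μ) x :=
  (continuousAt_const.add continuousAt_id).log hx

variable {n : ℕ}

theorem differentiableAt_aFun (hx : 1 + x / (n * (1 + μ)) ≠ 0) :
    DifferentiableAt ℝ (aFun μ n) x :=
  have haffine : DifferentiableAt ℝ (fun t : ℝ => 1 + t / (n * (1 + μ))) x :=
    (differentiableAt_id.div_const _).const_add 1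
  (haffine.log hx).div_const _

/-- If `μ ≤ 0` and `-μ` is one of the nodes `k / n`, the convention `f / 0 = 0` sets `f_μ` to `0` at
that node. -/
theorem stmt15_general (hμ : -1 < μ) (hn : 0 < n) (f : ℝ → ℝ) (hx : 0 < 1 + μ + x)
    (hlog : logμ μ x ≠ 0) :
    HasDerivAt (fun t => Lop μ n f t / logμ μ t)
      (deriv (aFun μ n) x * ∑ k ∈ Finset.range n,
        ((n : ℝ) * (f (((k : ℝ) + 1) / (n : ℝ)) / logμ μ (((k : ℝ) + 1) / (n : ℝ)) -
            f ((k : ℝ) / (n : ℝ)) / logμ μ ((k : ℝ) / (n : ℝ)))) *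
          pB (n - 1) k (aFun μ n x)) x := by
  have hBop : (fun t => Lop μ n f t / logμ μ t) =ᶠ[nhds x]
      Bop n (fun t => f t / logμ μ t) ∘ aFun μ n := by
    filter_upwards [(continuousAt_logμ hx.ne').eventually_ne hlog] with t ht
    exact Lop_div_logμ ht n f
  have harg : 0 < 1 + x / (n * (1 + μ)) :=
    one_add_div_mul_pos (by linarith) (Nat.one_le_cast.mpr hn) hx
  have haFun : HasDerivAt (aFun μ n) (deriv (aFun μ n) x) x :=
    (differentiableAt_aFun harg.ne').hasDerivAt
  rw [mul_comm]
  exact ((hasDerivAt_Bop n _ _).comp x haFun).congr_of_eventuallyEq hBop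

end Logarithmic

theorem stmt15 (μ : ℝ) (hμ : 0 < μ) (n : ℕ) (hn : 0 < n) (f : ℝ → ℝ) (x : ℝ)
    (hx : x ∈ Set.Icc (0:ℝ) 1) :
    deriv (fun t => Lop μ n f t / logμ μ t) x =
      deriv (aFun μ n) x * ∑ k ∈ Finset.range n,
        ((n : ℝ) * (f (((k : ℝ) + 1) / (n : ℝ)) / logμ μ (((k : ℝ) + 1) / (n : ℝ)) -
            f ((k : ℝ) / (n : ℝ)) / logμ μ ((k : ℝ) / (n : ℝ)))) *
          pB (n - 1) k (aFun μ n x) :=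
  (stmt15_general (by linarith) hn f (by linarith [hx.1])
    (Real.log_pos (by linarith [hx.1])).ne').deriv
end
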